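/- If T₁ : ℝ ⇒ ℝ and T₂ : ℝ ⇒ ℝ both belong to the class 𝒯, then their pointwise sum T₁ + T₂, defined by (T₁+T₂)(x) := {u + v : u ∈ T₁(x), v ∈ T₂(x)}, also belongs to 𝒯. -/

import Mathlib

/-!
Let `S₁, S₂` be maximal monotone extensions of `T₁, T₂` witnessing membership in the class, and
let `S = S₁ + S₂`, a monotone operator. The domain of a maximal monotone operator on `ℝ` is
order-connected (`MaxMonotoneOp.ordConnected_dom`), hence so is `D = dom S = dom S₁ ∩ dom S₂`.

If `D` is empty, `T₁ + T₂` is empty and the zero operator is a suitable extension. Otherwise the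
operator `relOp S`, which over the closure of `D` collects all values monotonically related to the
graph of `S` and is empty elsewhere, is a maximal monotone extension of `S` (`relOp_maxMonotone`);
this avoids having to prove that `S` itself is maximal.

Take a common refinement of the two breakpoint sets (`exists_refinement`). On each of its open
intervals, either one summand is empty, so that the interval misses `D` and, being open, also
its closure; or both summands are single-valued and continuous there, and by continuity the only
value related to `S` at a point is the value of `S` (`relOp_eq_singleton`). A sum of constant or
strictly increasing continuous functions is again of one of these two kinds.
-/

noncomputable section


/-- Finite sets of breakpoints `-∞ = b₀ < b₁ < ⋯ < b_m = +∞`. -/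
structure Breakpoints where
  m : ℕ
  hm : 0 < m
  pts : ℕ → EReal
  bot : pts 0 = ⊥
  top : pts m = ⊤
  mono : ∀ i j : ℕ, i < j → j ≤ m → pts i < pts j

/-- The `i`-th open interval `(bᵢ, bᵢ₊₁)` determined by the breakpoints. -/
def Breakpoints.itv (B : Breakpoints) (i : ℕ) : Set ℝ :=
  {x : ℝ | B.pts i < (x : EReal) ∧ (x : EReal) < B.pts (i + 1)}

/-- Convexity for extended-real-valued functions on `ℝ`. -/
def ERealConvex (f : ℝ → EReal) : Prop :=
  ∀ x y a b : ℝ, 0 ≤ a → 0 ≤ b → a + b = 1 →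
    f (a * x + b * y) ≤ (a : EReal) * f x + (b : EReal) * f y

/-- The effective domain of an extended-real-valued function nowhere equal to `-∞`. -/
def effDom (f : ℝ → EReal) : Set ℝ := {x : ℝ | f x ≠ ⊤}

/-- `f` is (finite and) affine on `s`. -/
def IsAffineOn (f : ℝ → EReal) (s : Set ℝ) : Prop :=
  ∃ c d : ℝ, ∀ x ∈ s, f x = ((c * x + d : ℝ) : EReal)

/-- `f` is (finite,) strictly convex and differentiable on `s`. -/
def IsStrictConvexDiffOn (f : ℝ → EReal) (s : Set ℝ) : Prop :=
  ∃ g : ℝ → ℝ, (∀ x ∈ s, f x = (g x : EReal)) ∧ StrictConvexOn ℝ s g ∧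
    ∀ x ∈ s, DifferentiableAt ℝ g x

/-- Membership in the class `F(A)` for the breakpoint set `A = B`. -/
def MemFA (B : Breakpoints) (f : ℝ → EReal) : Prop :=
  (∀ x, f x ≠ ⊥) ∧ LowerSemicontinuous f ∧ ERealConvex f ∧
  ContinuousOn f (effDom f) ∧
  ∀ i : ℕ, i < B.m →
    IsAffineOn f (B.itv i) ∨ IsStrictConvexDiffOn f (B.itv i) ∨
      ∀ x ∈ B.itv i, f x = ⊤

/-- Membership in the class `F`. -/
def MemF (f : ℝ → EReal) : Prop := ∃ B : Breakpoints, MemFA B f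

/-- The convex subdifferential of `f : ℝ → (-∞,+∞]` (empty outside the effective domain). -/
def subdiff (f : ℝ → EReal) (x : ℝ) : Set ℝ :=
  {φ : ℝ | f x ≠ ⊤ ∧ ∀ y : ℝ, ((φ * (y - x) : ℝ) : EReal) + f x ≤ f y}

/-- `T` is a monotone operator. -/
def MonotoneOp (T : ℝ → Set ℝ) : Prop :=
  ∀ ⦃x u y v : ℝ⦄, u ∈ T x → v ∈ T y → 0 ≤ (u - v) * (x - y)

/-- `T` is a maximal monotone operator: its graph is not properly contained in the
graph of any monotone operator. -/
def MaxMonotoneOp (T : ℝ → Set ℝ) : Prop :=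
  MonotoneOp T ∧
    ∀ S : ℝ → Set ℝ, MonotoneOp S → (∀ x, T x ⊆ S x) → ∀ x, S x ⊆ T x

/-- `T` is single-valued and constant on `s`. -/
def SingleConstOn (T : ℝ → Set ℝ) (s : Set ℝ) : Prop :=
  ∃ c : ℝ, ∀ x ∈ s, T x = {c}

/-- `T` is single-valued, continuous and strictly monotone on `s`. -/
def SingleContStrictMonoOn (T : ℝ → Set ℝ) (s : Set ℝ) : Prop :=
  ∃ g : ℝ → ℝ, (∀ x ∈ s, T x = {g x}) ∧ ContinuousOn g s ∧ StrictMonoOn g s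

/-- `T` is identically equal to the empty set on `s`. -/
def EmptyOn (T : ℝ → Set ℝ) (s : Set ℝ) : Prop := ∀ x ∈ s, T x = ∅

/-- Membership in the class `𝒯(B)`. -/
def MemTB (B : Breakpoints) (T : ℝ → Set ℝ) : Prop :=
  ∃ T' : ℝ → Set ℝ, MaxMonotoneOp T' ∧ (∀ x, T x ⊆ T' x) ∧
    ∀ i : ℕ, i < B.m →
      SingleConstOn T' (B.itv i) ∨ SingleContStrictMonoOn T' (B.itv i) ∨
        EmptyOn T' (B.itv i)

/-- Membership in the class `𝒯`. -/
def MemT (T : ℝ → Set ℝ) : Prop := ∃ B : Breakpoints, MemTB B T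

/-- The inverse of a set-valued operator. -/
def invOp (T : ℝ → Set ℝ) : ℝ → Set ℝ := fun y => {x : ℝ | y ∈ T x}

/-- The pointwise (Minkowski) sum of two set-valued operators. -/
def addOp (S₁ S₂ : ℝ → Set ℝ) : ℝ → Set ℝ :=
  fun x => {w : ℝ | ∃ u ∈ S₁ x, ∃ v ∈ S₂ x, w = u + v}

/-! ### Domains of maximal monotone operators -/

/-- The effective domain of a set-valued operator. -/
def opDom (T : ℝ → Set ℝ) : Set ℝ := {x | (T x).Nonempty}

/-- The operator whose graph consists of the pairs `(x, u)` monotonically related to the whole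
graph of `S` and with `x` in the closure of the domain of `S`. -/
def relOp (S : ℝ → Set ℝ) : ℝ → Set ℝ :=
  fun x => {u | x ∈ closure (opDom S) ∧ ∀ y, ∀ v ∈ S y, 0 ≤ (u - v) * (x - y)}

lemma MonotoneOp.le {T : ℝ → Set ℝ} (hT : MonotoneOp T) {x y u v : ℝ} (hu : u ∈ T x)
    (hv : v ∈ T y) (hxy : x < y) : u ≤ v := by
  have := hT hu hv
  nlinarith

/-- A maximal monotone operator contains every pair monotonically related to its graph. -/
lemma MaxMonotoneOp.mem_of_related {T : ℝ → Set ℝ} (hT : MaxMonotoneOp T) {x u : ℝ}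
    (h : ∀ y, ∀ v ∈ T y, 0 ≤ (u - v) * (x - y)) : u ∈ T x := by
  refine hT.2 (fun y => {v | v ∈ T y ∨ (y = x ∧ v = u)}) ?_ (fun y v hv => Or.inl hv) x
    (Or.inr ⟨rfl, rfl⟩)
  rintro a p b q (hp | ⟨rfl, rfl⟩) (hq | ⟨rfl, rfl⟩)
  · exact hT.1 hp hq
  · have := h a p hp
    nlinarith
  · exact h b q hq
  · simp

lemma MaxMonotoneOp.ordConnected_dom {T : ℝ → Set ℝ} (hT : MaxMonotoneOp T) :
    (opDom T).OrdConnected := by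
  refine Set.ordConnected_of_Ioo ?_
  rintro x ⟨u, hu⟩ y ⟨v, hv⟩ - z ⟨hxz, hzy⟩
  -- The supremum of the values of `T` to the left of `z` belongs to `T z`.
  set A : Set ℝ := {a | ∃ p ≤ z, a ∈ T p} with hA
  have hne : A.Nonempty := ⟨u, x, hxz.le, hu⟩
  have hub : ∀ q, z < q → ∀ b ∈ T q, ∀ a ∈ A, a ≤ b := by
    rintro q hq b hb a ⟨p, hp, ha⟩
    exact hT.1.le ha hb (hp.trans_lt hq)
  have hbdd : BddAbove A := ⟨v, fun a ha => hub y hzy v hv a ha⟩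
  refine ⟨sSup A, hT.mem_of_related fun q b hb => ?_⟩
  rcases le_or_gt q z with hq | hq
  · have : b ≤ sSup A := le_csSup hbdd ⟨q, hq, hb⟩
    exact mul_nonneg (by linarith) (by linarith)
  · have : sSup A ≤ b := csSup_le hne (hub q hq b hb)
    exact mul_nonneg_of_nonpos_of_nonpos (by linarith) (by linarith)

/-! ### The maximal extension `relOp S` -/

lemma le_relOp {S : ℝ → Set ℝ} (hS : MonotoneOp S) (x : ℝ) : S x ⊆ relOp S x :=
  fun u hu => ⟨subset_closure ⟨u, hu⟩, fun _ _ hv => hS hu hv⟩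

lemma exists_mem_Ioo_of_closure {D : Set ℝ} (hD : D.OrdConnected) {x y : ℝ}
    (hx : x ∈ closure D) (hy : y ∈ closure D) (hxy : x < y) : ∃ z ∈ D, x < z ∧ z < y := by
  obtain ⟨p, hp, hxp⟩ := Metric.mem_closure_iff.1 hx ((y - x) / 3) (by linarith)
  obtain ⟨q, hq, hyq⟩ := Metric.mem_closure_iff.1 hy ((y - x) / 3) (by linarith)
  rw [Real.dist_eq, abs_lt] at hxp hyq
  exact ⟨(x + y) / 2, hD.out hp hq ⟨by linarith, by linarith⟩, by linarith, by linarith⟩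

lemma relOp_monotone {S : ℝ → Set ℝ} (hD : (opDom S).OrdConnected) :
    MonotoneOp (relOp S) := by
  have key : ∀ x u y v, u ∈ relOp S x → v ∈ relOp S y → x < y → u ≤ v := by
    rintro x u y v ⟨hx, hu⟩ ⟨hy, hv⟩ hxy
    obtain ⟨z, ⟨s, hs⟩, hxz, hzy⟩ := exists_mem_Ioo_of_closure hD hx hy hxy
    have h1 := hu z s hs
    have h2 := hv z s hs
    have h3 : u ≤ s := by nlinarith
    have h4 : s ≤ v := by nlinarith
    exact h3.trans h4
  intro x u y v hu hv
  rcases lt_trichotomy x y with h | rfl | h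
  · have := key x u y v hu hv h
    exact mul_nonneg_of_nonpos_of_nonpos (by linarith) (by linarith)
  · simp
  · have := key y v x u hv hu h
    exact mul_nonneg (by linarith) (by linarith)

/-- If `D = dom S` is bounded on the side of a point `y` outside `closure D`, then the values of
`relOp S` at the corresponding endpoint of `D` are unbounded, so no pair `(y, w)` can be added. -/
lemma relOp_maxMonotone {S : ℝ → Set ℝ} (hS : MonotoneOp S)
    (hD : (opDom S).OrdConnected) (hne : (opDom S).Nonempty) : MaxMonotoneOp (relOp S) := by
  refine ⟨relOp_monotone hD, fun R hR hle y w hw => ?_⟩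
  have hrel : ∀ z, ∀ v ∈ S z, 0 ≤ (w - v) * (y - z) := fun z v hv =>
    hR hw (hle z (le_relOp hS z hv))
  refine ⟨?_, hrel⟩
  by_contra hy
  have hyD : y ∉ opDom S := fun h => hy (subset_closure h)
  obtain ⟨d, hd⟩ := hne
  rcases lt_or_gt_of_ne (fun h : d = y => hyD (h ▸ hd)) with hdy | hdy
  · have hlt : ∀ z ∈ opDom S, z < y := by
      intro z hz
      by_contra! h
      exact hyD (hD.out hd hz ⟨hdy.le, h⟩)
    have hbdd : BddAbove (opDom S) := ⟨y, fun z hz => (hlt z hz).le⟩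
    have hb := csSup_mem_closure ⟨d, hd⟩ hbdd
    have hby : sSup (opDom S) < y := lt_of_le_of_ne
      (csSup_le ⟨d, hd⟩ fun z hz => (hlt z hz).le) (fun h => hy (h ▸ hb))
    have hmem : w + 1 ∈ relOp S (sSup (opDom S)) := by
      refine ⟨hb, fun z v hv => ?_⟩
      have h1 := hlt z ⟨v, hv⟩
      have h2 := le_csSup hbdd (show z ∈ opDom S from ⟨v, hv⟩)
      have h3 := hrel z v hv
      have h4 : v ≤ w := by nlinarith
      exact mul_nonneg (by linarith) (by linarith)
    have := hR (hle _ hmem) hw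
    nlinarith
  · have hlt : ∀ z ∈ opDom S, y < z := by
      intro z hz
      by_contra! h
      exact hyD (hD.out hz hd ⟨h, hdy.le⟩)
    have hbdd : BddBelow (opDom S) := ⟨y, fun z hz => (hlt z hz).le⟩
    have hb := csInf_mem_closure ⟨d, hd⟩ hbdd
    have hby : y < sInf (opDom S) := lt_of_le_of_ne
      (le_csInf ⟨d, hd⟩ fun z hz => (hlt z hz).le) (fun h => hy (h ▸ hb))
    have hmem : w - 1 ∈ relOp S (sInf (opDom S)) := by
      refine ⟨hb, fun z v hv => ?_⟩
      have h1 := hlt z ⟨v, hv⟩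
      have h2 := csInf_le hbdd (show z ∈ opDom S from ⟨v, hv⟩)
      have h3 := hrel z v hv
      have h4 : w ≤ v := by nlinarith
      exact mul_nonneg_of_nonpos_of_nonpos (by linarith) (by linarith)
    have := hR (hle _ hmem) hw
    nlinarith

lemma relOp_eq_singleton {S : ℝ → Set ℝ} (hS : MonotoneOp S) {s : Set ℝ} (hs : IsOpen s)
    {g : ℝ → ℝ} (hg : ContinuousOn g s) (hSg : ∀ x ∈ s, S x = {g x}) :
    ∀ x ∈ s, relOp S x = {g x} := by
  intro x hx
  have hgx : Filter.Tendsto g (nhds x) (nhds (g x)) := hg.continuousAt (hs.mem_nhds hx)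
  refine Set.Subset.antisymm ?_ (by rw [← hSg x hx]; exact le_relOp hS x)
  rintro u ⟨-, hu⟩
  have hu' : ∀ y ∈ s, 0 ≤ (u - g y) * (x - y) := fun y hy => hu y _ (by rw [hSg y hy]; rfl)
  have hnhds : ∀ᶠ y in nhds x, y ∈ s := hs.mem_nhds hx
  refine le_antisymm (ge_of_tendsto (hgx.mono_left (nhdsWithin_le_nhds (s := Set.Ioi x))) ?_)
    (le_of_tendsto (hgx.mono_left (nhdsWithin_le_nhds (s := Set.Iio x))) ?_)
  · filter_upwards [self_mem_nhdsWithin, nhdsWithin_le_nhds hnhds] with y hxy hy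
    have h1 := hu' y hy
    have h2 : x < y := hxy
    nlinarith
  · filter_upwards [self_mem_nhdsWithin, nhdsWithin_le_nhds hnhds] with y hxy hy
    have h1 := hu' y hy
    have h2 : y < x := hxy
    nlinarith

lemma relOp_eq_empty {S : ℝ → Set ℝ} {s : Set ℝ} (hs : IsOpen s) (hSs : ∀ x ∈ s, S x = ∅) :
    ∀ x ∈ s, relOp S x = ∅ := by
  intro x hx
  refine Set.eq_empty_of_forall_notMem fun u hu => ?_
  obtain ⟨z, hz, v, hv⟩ := mem_closure_iff.1 hu.1 s hs hx
  simp [hSs z hz] at hv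

/-! ### Refining breakpoint sets -/

lemma Breakpoints.isOpen_itv (B : Breakpoints) (i : ℕ) : IsOpen (B.itv i) :=
  (isOpen_lt continuous_const continuous_coe_real_ereal).inter
    (isOpen_lt continuous_coe_real_ereal continuous_const)

/-- Listing a finite set `F` containing `⊥` and `⊤` in increasing order gives a breakpoint set such
that no element of `F` lies strictly between consecutive breakpoints. -/
lemma exists_breakpoints (F : Finset EReal) (hbot : ⊥ ∈ F) (htop : ⊤ ∈ F) :
    ∃ B : Breakpoints, ∀ i < B.m, ∀ c ∈ F, B.pts i < c → B.pts (i + 1) ≤ c := by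
  have hcard : 1 < F.card := Finset.one_lt_card.2 ⟨⊥, hbot, ⊤, htop, bot_ne_top⟩
  let e := F.orderEmbOfFin rfl
  have he : ∀ c ∈ F, ∃ k, e k = c := fun c hc => by
    have : c ∈ Set.range e := by rw [Finset.range_orderEmbOfFin]; exact hc
    exact this
  refine ⟨⟨F.card - 1, by omega, fun i => if h : i < F.card then e ⟨i, h⟩ else ⊤, ?_, ?_, ?_⟩, ?_⟩
  · obtain ⟨k, hk⟩ := he ⊥ hbot
    rw [dif_pos (by omega), eq_bot_iff, ← hk]
    exact e.monotone (Fin.mk_le_of_le_val (Nat.zero_le _))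
  · obtain ⟨k, hk⟩ := he ⊤ htop
    rw [dif_pos (by omega), eq_top_iff, ← hk]
    refine e.monotone (Fin.le_def.2 ?_)
    have := k.2
    simp only
    omega
  · intro i j hij hj
    rw [dif_pos (by omega), dif_pos (by omega)]
    exact e.strictMono (Fin.mk_lt_mk.2 hij)
  · intro i hi c hc hlt
    obtain ⟨k, rfl⟩ := he c hc
    simp only at hi hlt ⊢
    rw [dif_pos (by omega)] at hlt ⊢
    have h := e.lt_iff_lt.1 hlt
    exact e.monotone (Fin.le_def.2 (Fin.lt_def.1 h))

/-- If no breakpoint of `B₁` lies strictly inside an interval of `B`, that interval is contained in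
an interval of `B₁`. -/
lemma Breakpoints.exists_itv_subset (B B₁ : Breakpoints) {i : ℕ} (hi : i < B.m)
    (h : ∀ j ≤ B₁.m, B.pts i < B₁.pts j → B.pts (i + 1) ≤ B₁.pts j) :
    ∃ j < B₁.m, B.itv i ⊆ B₁.itv j := by
  have hex : ∃ j, B.pts i < B₁.pts j :=
    ⟨B₁.m, by rw [B₁.top, ← B.top]; exact B.mono i B.m hi le_rfl⟩
  classical
  have hspec := Nat.find_spec hex
  have hle : Nat.find hex ≤ B₁.m :=
    Nat.find_min' hex (by rw [B₁.top, ← B.top]; exact B.mono i B.m hi le_rfl)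
  obtain ⟨j, hj⟩ : ∃ j, Nat.find hex = j + 1 := by
    refine Nat.exists_eq_succ_of_ne_zero fun h0 => ?_
    rw [h0, B₁.bot] at hspec
    exact not_lt_bot hspec
  have hmin : B₁.pts j ≤ B.pts i := not_lt.1 (Nat.find_min hex (m := j) (by omega))
  rw [hj] at hspec hle
  exact ⟨j, hle, fun x hx => ⟨hmin.trans_lt hx.1, hx.2.trans_le (h _ hle hspec)⟩⟩

lemma exists_refinement (B₁ B₂ : Breakpoints) : ∃ B : Breakpoints, ∀ i < B.m,
    (∃ j < B₁.m, B.itv i ⊆ B₁.itv j) ∧ ∃ j < B₂.m, B.itv i ⊆ B₂.itv j := by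
  classical
  have hmem₁ : ∀ j ≤ B₁.m, B₁.pts j ∈ (Finset.range (B₁.m + 1)).image B₁.pts := fun j hj =>
    Finset.mem_image_of_mem _ (Finset.mem_range.2 (by omega))
  have hmem₂ : ∀ j ≤ B₂.m, B₂.pts j ∈ (Finset.range (B₂.m + 1)).image B₂.pts := fun j hj =>
    Finset.mem_image_of_mem _ (Finset.mem_range.2 (by omega))
  obtain ⟨B, hB⟩ := exists_breakpoints
    ((Finset.range (B₁.m + 1)).image B₁.pts ∪ (Finset.range (B₂.m + 1)).image B₂.pts)
    (Finset.mem_union_left _ (B₁.bot ▸ hmem₁ 0 (Nat.zero_le _)))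
    (Finset.mem_union_left _ (B₁.top ▸ hmem₁ B₁.m le_rfl))
  exact ⟨B, fun i hi =>
    ⟨B.exists_itv_subset B₁ hi fun j hj => hB i hi _ (Finset.mem_union_left _ (hmem₁ j hj)),
      B.exists_itv_subset B₂ hi fun j hj => hB i hi _ (Finset.mem_union_right _ (hmem₂ j hj))⟩⟩

/-! ### Sums of operators -/

lemma addOp_monotone {S₁ S₂ : ℝ → Set ℝ} (h₁ : MonotoneOp S₁) (h₂ : MonotoneOp S₂) :
    MonotoneOp (addOp S₁ S₂) := by
  rintro x _ y _ ⟨a, ha, b, hb, rfl⟩ ⟨c, hc, d, hd, rfl⟩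
  have h1 := h₁ ha hc
  have h2 := h₂ hb hd
  nlinarith

lemma opDom_addOp (S₁ S₂ : ℝ → Set ℝ) : opDom (addOp S₁ S₂) = opDom S₁ ∩ opDom S₂ := by
  ext x
  constructor
  · rintro ⟨_, a, ha, b, hb, rfl⟩
    exact ⟨⟨a, ha⟩, ⟨b, hb⟩⟩
  · rintro ⟨⟨a, ha⟩, ⟨b, hb⟩⟩
    exact ⟨a + b, a, ha, b, hb, rfl⟩

lemma zeroOp_maxMonotone : MaxMonotoneOp (fun _ => {0}) := by
  have hmono : MonotoneOp (fun _ => ({0} : Set ℝ)) := by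
    rintro x u y v rfl rfl
    simp
  refine ⟨hmono, fun R hR hle x u hu => ?_⟩
  have h1 := hR hu (hle (x + 1) rfl)
  have h2 := hR hu (hle (x - 1) rfl)
  exact le_antisymm (by linarith) (by linarith)

/-- The alternatives (i) and (ii) of the class, merged: on `s` the operator is given by a
continuous function that is constant or strictly increasing. -/
lemma singleValued_or_empty {T : ℝ → Set ℝ} {s : Set ℝ}
    (h : SingleConstOn T s ∨ SingleContStrictMonoOn T s ∨ EmptyOn T s) :
    (∃ g : ℝ → ℝ, (∀ x ∈ s, T x = {g x}) ∧ ContinuousOn g s ∧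
      ((∃ c, ∀ x ∈ s, g x = c) ∨ StrictMonoOn g s)) ∨ EmptyOn T s := by
  rcases h with ⟨c, hc⟩ | ⟨g, hg, hgc, hgm⟩ | h
  · exact Or.inl ⟨fun _ => c, hc, continuousOn_const, Or.inl ⟨c, fun _ _ => rfl⟩⟩
  · exact Or.inl ⟨g, hg, hgc, Or.inr hgm⟩
  · exact Or.inr h

lemma relOp_addOp_on {S₁ S₂ : ℝ → Set ℝ} (hm₁ : MonotoneOp S₁) (hm₂ : MonotoneOp S₂)
    {s : Set ℝ} (hs : IsOpen s)
    (h₁ : SingleConstOn S₁ s ∨ SingleContStrictMonoOn S₁ s ∨ EmptyOn S₁ s)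
    (h₂ : SingleConstOn S₂ s ∨ SingleContStrictMonoOn S₂ s ∨ EmptyOn S₂ s) :
    SingleConstOn (relOp (addOp S₁ S₂)) s ∨ SingleContStrictMonoOn (relOp (addOp S₁ S₂)) s ∨
      EmptyOn (relOp (addOp S₁ S₂)) s := by
  rcases singleValued_or_empty h₁ with ⟨g, hg, hgc, hg'⟩ | h₁
  · rcases singleValued_or_empty h₂ with ⟨k, hk, hkc, hk'⟩ | h₂
    · have hsum := relOp_eq_singleton (addOp_monotone hm₁ hm₂) hs (hgc.add hkc) (by
        intro x hx
        ext w
        simp [addOp, hg x hx, hk x hx])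
      have hstrict : StrictMonoOn (g + k) s → SingleContStrictMonoOn (relOp (addOp S₁ S₂)) s :=
        fun h => ⟨g + k, hsum, hgc.add hkc, h⟩
      rcases hg' with ⟨c, hc⟩ | hgm
      · rcases hk' with ⟨d, hd⟩ | hkm
        · exact Or.inl ⟨c + d, fun x hx => by rw [hsum x hx, Pi.add_apply, hc x hx, hd x hx]⟩
        · refine Or.inr (Or.inl (hstrict fun x hx y hy hxy => ?_))
          have := hkm hx hy hxy
          simp only [Pi.add_apply, hc x hx, hc y hy]
          linarith
      · rcases hk' with ⟨d, hd⟩ | hkm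
        · refine Or.inr (Or.inl (hstrict fun x hx y hy hxy => ?_))
          have := hgm hx hy hxy
          simp only [Pi.add_apply, hd x hx, hd y hy]
          linarith
        · exact Or.inr (Or.inl (hstrict (hgm.add hkm)))
    · exact Or.inr (Or.inr (relOp_eq_empty hs fun x hx => by simp [addOp, h₂ x hx]))
  · exact Or.inr (Or.inr (relOp_eq_empty hs fun x hx => by simp [addOp, h₁ x hx]))

lemma alternatives_mono {T : ℝ → Set ℝ} {s t : Set ℝ} (hst : s ⊆ t)
    (h : SingleConstOn T t ∨ SingleContStrictMonoOn T t ∨ EmptyOn T t) :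
    SingleConstOn T s ∨ SingleContStrictMonoOn T s ∨ EmptyOn T s := by
  rcases h with ⟨c, hc⟩ | ⟨g, hg, hgc, hgm⟩ | h
  · exact Or.inl ⟨c, fun x hx => hc x (hst hx)⟩
  · exact Or.inr (Or.inl ⟨g, fun x hx => hg x (hst hx), hgc.mono hst, hgm.mono hst⟩)
  · exact Or.inr (Or.inr fun x hx => h x (hst hx))

/-- The class `𝒯` is closed under pointwise sums. -/
theorem stmt4 (T₁ T₂ : ℝ → Set ℝ) (h₁ : MemT T₁) (h₂ : MemT T₂) :
    MemT (addOp T₁ T₂) := by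
  obtain ⟨B₁, S₁, hS₁, hTS₁, hB₁⟩ := h₁
  obtain ⟨B₂, S₂, hS₂, hTS₂, hB₂⟩ := h₂
  have hsub : ∀ x, addOp T₁ T₂ x ⊆ addOp S₁ S₂ x := by
    rintro x _ ⟨a, ha, b, hb, rfl⟩
    exact ⟨a, hTS₁ x ha, b, hTS₂ x hb, rfl⟩
  rcases (opDom (addOp S₁ S₂)).eq_empty_or_nonempty with hemp | hne
  · refine ⟨B₁, fun _ => {0}, zeroOp_maxMonotone, fun x w hw => ?_,
      fun i _ => Or.inl ⟨0, fun _ _ => rfl⟩⟩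
    have : x ∈ opDom (addOp S₁ S₂) := ⟨w, hsub x hw⟩
    simp [hemp] at this
  · obtain ⟨B, hB⟩ := exists_refinement B₁ B₂
    have hmono := addOp_monotone hS₁.1 hS₂.1
    have hD : (opDom (addOp S₁ S₂)).OrdConnected := by
      rw [opDom_addOp]
      exact hS₁.ordConnected_dom.inter hS₂.ordConnected_dom
    refine ⟨B, relOp (addOp S₁ S₂), relOp_maxMonotone hmono hD hne,
      fun x => (hsub x).trans (le_relOp hmono x), fun i hi => ?_⟩
    obtain ⟨⟨j, hj, hij⟩, k, hk, hik⟩ := hB i hi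
    exact relOp_addOp_on hS₁.1 hS₂.1 (B.isOpen_itv i)
      (alternatives_mono hij (hB₁ j hj)) (alternatives_mono hik (hB₂ k hk))
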